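/- Let G and H be connected graphs of order n₁ ≥ 2 and n₂ ≥ 2, respectively. If the diameter of H is at most 2, then pd(G⊙H) ≤ dim(G) + dim(H) + 2. -/

import Mathlib

/-!
Let `S` and `T` be resolving sets of `G` and `H`. Partition the vertices of `G ⊙ H` into the
singletons `{s}` for `s ∈ S`, the rest of `G`, the layers `V × {t}` for `t ∈ T`, and the rest of
the copies of `H`; discarding empty cells leaves at most `|S| + |T| + 2` of them.

Vertices in different cells are separated by their own cells. The distances to `{s}` from a vertex
`a` of `G` and from a vertex of the copy of `H` at `a` are `d(a, s)` and `d(a, s) + 1`, so the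
singletons determine `a`. A detour through `a` joins two vertices of this copy by a path of length
`2`, which is no shortcut when `H` has diameter at most `2`; hence the vertex `w` of the copy is at
distance `d(w, t)` from `V × {t}`, and the layers determine `w`.
-/

open SimpleGraph

/-- The corona product `G ⊙ H`: one copy of `G`, one copy of `H` for each vertex of `G`,
with the `i`-th vertex of `G` joined to every vertex of the `i`-th copy of `H`. -/
def corona {α β : Type*} (G : SimpleGraph α) (H : SimpleGraph β) :
    SimpleGraph (α ⊕ α × β) :=
  SimpleGraph.fromRel (fun x y =>
    match x, y with
    | Sum.inl a, Sum.inl b => G.Adj a b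
    | Sum.inl a, Sum.inr iu => a = iu.1
    | Sum.inr iu, Sum.inr jw => iu.1 = jw.1 ∧ H.Adj iu.2 jw.2
    | _, _ => False)

/-- The distance from a vertex to a set of vertices: `d(v,A) = min_{u ∈ A} d(v,u)`. -/
noncomputable def setDist {α : Type*} (G : SimpleGraph α) (v : α) (A : Set α) : ℕ :=
  sInf (G.dist v '' A)

/-- `S` is a resolving set for `G`: distinct vertices have distinct metric representations. -/
def IsResolvingSet {α : Type*} (G : SimpleGraph α) (S : Set α) : Prop :=
  ∀ u v : α, (∀ w ∈ S, G.dist u w = G.dist v w) → u = v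

/-- The metric dimension of `G`: minimum cardinality of a resolving set. -/
noncomputable def metricDim {α : Type*} (G : SimpleGraph α) : ℕ :=
  sInf {k | ∃ S : Set α, IsResolvingSet G S ∧ S.ncard = k}

/-- A family of sets is a resolving partition for `G` if it is a partition of the vertex set
into nonempty cells and distinct vertices have distinct partition representations. -/
def IsResolvingPartition {α : Type*} (G : SimpleGraph α) (P : Set (Set α)) : Prop :=
  (∀ A ∈ P, A.Nonempty) ∧ (∀ v : α, ∃! A : Set α, A ∈ P ∧ v ∈ A) ∧
    ∀ u v : α, (∀ A ∈ P, setDist G u A = setDist G v A) → u = v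

/-- The partition dimension of `G`: minimum number of cells in a resolving partition. -/
noncomputable def partitionDim {α : Type*} (G : SimpleGraph α) : ℕ :=
  sInf {t | ∃ P : Set (Set α), IsResolvingPartition G P ∧ P.ncard = t}

/-- `c(H)`: the maximum cardinality of a connected component of `H` which is isomorphic to a
complete graph (i.e. whose vertex set is a clique). -/
noncomputable def maxCompleteComp {β : Type*} (H : SimpleGraph β) : ℕ :=
  sSup {k | ∃ C : H.ConnectedComponent, H.IsClique C.supp ∧ C.supp.ncard = k}

/-- `β(H)`: the number of isolated vertices of `H`. -/
noncomputable def numIsolated {β : Type*} (H : SimpleGraph β) : ℕ :=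
  Set.ncard {v : β | ∀ u, ¬ H.Adj v u}

/-- `α(H)`: the number of connected components of `H` of order greater than one. -/
noncomputable def numBigComp {β : Type*} (H : SimpleGraph β) : ℕ :=
  Set.ncard {C : H.ConnectedComponent | 1 < C.supp.ncard}

section Distance

variable {V V' : Type*} {G : SimpleGraph V} {G' : SimpleGraph V'} {u v : V}

lemma dist_le_dist_add_one_of_adj (h : G.Adj u v) (w : V) : G.dist u w ≤ G.dist v w + 1 := by
  have := h.symm.diff_dist_adj (u := w)
  rw [G.dist_comm (u := u), G.dist_comm (u := v)]
  lia

lemma le_add_dist_of_forall_adj {φ : V → ℕ} (hφ : ∀ x y, G.Adj x y → φ x ≤ φ y + 1)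
    (h : G.Reachable u v) : φ u ≤ φ v + G.dist u v := by
  obtain ⟨p, hp⟩ := h.exists_walk_length_eq_dist
  rw [← hp]
  clear hp h
  induction p with
  | nil => rfl
  | cons hadj p ih =>
    have := hφ _ _ hadj
    rw [Walk.length_cons]
    lia

lemma dist_map_le_of_reachable (f : G →g G') (h : G.Reachable u v) :
    G'.dist (f u) (f v) ≤ G.dist u v := by
  simpa using le_add_dist_of_forall_adj (φ := fun x ↦ G'.dist (f x) (f v))
    (fun _ _ hadj ↦ dist_le_dist_add_one_of_adj (f.map_adj hadj) _) h

lemma dist_le_of_ediam_le {k : ℕ} (h : G.ediam ≤ k) (u v : V) : G.dist u v ≤ k :=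
  ENat.toNat_le_of_le_natCast (edist_le_ediam.trans h)

lemma ediam_le_of_diam_le [Finite V] {k : ℕ} (hG : G.Connected) (h : G.diam ≤ k) :
    G.ediam ≤ k := by
  have := hG.nonempty
  rw [← ENat.natCast_toNat (connected_iff_ediam_ne_top.1 hG)]
  exact_mod_cast h

lemma setDist_singleton (v u : V) : setDist G v {u} = G.dist v u := by
  rw [setDist, Set.image_singleton, csInf_singleton]

lemma setDist_eq_dist_of_forall_le {A : Set V} (hu : u ∈ A)
    (hle : ∀ x ∈ A, G.dist v u ≤ G.dist v x) : setDist G v A = G.dist v u :=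
  IsLeast.csInf_eq ⟨Set.mem_image_of_mem _ hu, Set.forall_mem_image.2 hle⟩

lemma setDist_eq_zero_iff (hG : G.Connected) {A : Set V} (hA : A.Nonempty) :
    setDist G v A = 0 ↔ v ∈ A := by
  simp [setDist, Nat.sInf_eq_zero, hG.dist_eq_zero_iff, hA.ne_empty]

end Distance

section Resolving

variable {V : Type*} {G : SimpleGraph V}

lemma isResolvingSet_univ (hG : G.Connected) : IsResolvingSet G Set.univ := fun _ v h ↦
  hG.dist_eq_zero_iff.1 ((h v trivial).trans dist_self)

lemma exists_isResolvingSet_encard_eq_metricDim [Finite V] (hG : G.Connected) :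
    ∃ S, IsResolvingSet G S ∧ S.encard = metricDim G := by
  obtain ⟨S, hS, hcard⟩ : metricDim G ∈ {k | ∃ S, IsResolvingSet G S ∧ S.ncard = k} :=
    Nat.sInf_mem ⟨_, Set.univ, isResolvingSet_univ hG, rfl⟩
  exact ⟨S, hS, by rw [← hcard, S.toFinite.cast_ncard_eq]⟩

lemma partitionDim_le_of_encard_le {P : Set (Set V)} {k : ℕ} (hP : IsResolvingPartition G P)
    (hk : P.encard ≤ k) : partitionDim G ≤ k :=
  calc partitionDim G
    _ ≤ P.ncard := Nat.sInf_le ⟨P, hP, rfl⟩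
    _ ≤ k := (Set.encard_le_coe_iff_finite_ncard_le.1 hk).2

lemma isResolvingPartition_classes (hG : G.Connected) {r : Setoid V}
    (hr : ∀ u v, r u v → (∀ x, setDist G u {y | r y x} = setDist G v {y | r y x}) → u = v) :
    IsResolvingPartition G r.classes := by
  have hnonempty : ∀ A ∈ r.classes, A.Nonempty := fun A hA ↦
    Set.nonempty_iff_ne_empty.2 fun h ↦ Setoid.empty_notMem_classes (h ▸ hA)
  refine ⟨hnonempty, Setoid.classes_eqv_classes, fun u v h ↦ ?_⟩
  have hv := r.mem_classes v
  have huv : u ∈ {y | r y v} := by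
    rw [← setDist_eq_zero_iff hG (hnonempty _ hv), h _ hv,
      setDist_eq_zero_iff hG (hnonempty _ hv)]
    exact r.refl v
  exact hr u v huv fun x ↦ h _ (r.mem_classes x)

lemma exists_isResolvingPartition_of_coloring (hG : G.Connected) {C : Type*} (f : V → C)
    (hf : ∀ u v, f u = f v →
      (∀ x, setDist G u (f ⁻¹' {f x}) = setDist G v (f ⁻¹' {f x})) → u = v) :
    ∃ P, IsResolvingPartition G P ∧ P.encard ≤ ENat.card C := by
  refine ⟨(Setoid.ker f).classes, isResolvingPartition_classes hG hf, ?_⟩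
  calc (Setoid.ker f).classes.encard
    _ ≤ (Set.range fun c ↦ {x | f x = c}).encard :=
      Set.encard_le_encard (Setoid.classes_ker_subset_fiber_set f)
    _ ≤ ENat.card C := by
      rw [← Set.image_univ, ← Set.encard_univ C]
      exact Set.encard_image_le _ _

end Resolving

section Corona

variable {V W : Type*} {G : SimpleGraph V} {H : SimpleGraph W}

lemma corona_adj_inl_inl {a b : V} :
    (corona G H).Adj (Sum.inl a) (Sum.inl b) ↔ G.Adj a b := by
  simpa [corona, G.adj_comm b a] using G.ne_of_adj

lemma corona_adj_inl_inr {a b : V} {w : W} :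
    (corona G H).Adj (Sum.inl a) (Sum.inr (b, w)) ↔ a = b := by
  simp [corona]

lemma corona_adj_inr_inl {a b : V} {w : W} :
    (corona G H).Adj (Sum.inr (a, w)) (Sum.inl b) ↔ a = b := by
  rw [adj_comm, corona_adj_inl_inr, eq_comm]

lemma corona_adj_inr_inr {a b : V} {w z : W} :
    (corona G H).Adj (Sum.inr (a, w)) (Sum.inr (b, z)) ↔ a = b ∧ H.Adj w z := by
  simpa [corona, H.adj_comm z w, eq_comm (a := b)] using fun _ h _ ↦ h.ne

/-- The inclusion of `G` into `G ⊙ H`, along which walks of `G` are transported. -/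
def coronaInl (G : SimpleGraph V) (H : SimpleGraph W) : G →g corona G H where
  toFun := Sum.inl
  map_rel' := corona_adj_inl_inl.2

/-- The inclusion of `H` into `G ⊙ H` as the copy attached to the vertex `a` of `G`, along which
walks of `H` are transported. -/
def coronaInr (G : SimpleGraph V) (H : SimpleGraph W) (a : V) : H →g corona G H where
  toFun w := Sum.inr (a, w)
  map_rel' h := corona_adj_inr_inr.2 ⟨rfl, h⟩

lemma corona_connected (hG : G.Connected) : (corona G H).Connected := by
  obtain ⟨a₀⟩ := hG.nonempty
  have hinl (a : V) : (corona G H).Reachable (Sum.inl a₀) (Sum.inl a) :=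
    (hG a₀ a).map (coronaInl G H)
  refine connected_iff_exists_forall_reachable _ |>.2 ⟨Sum.inl a₀, ?_⟩
  rintro (a | ⟨a, w⟩)
  · exact hinl a
  · exact (hinl a).trans (corona_adj_inl_inr.2 rfl).reachable

lemma elim_dist_le_dist_corona_inl (hG : G.Connected) (x : V ⊕ V × W) (b : V) :
    x.elim (G.dist · b) (fun p ↦ G.dist p.1 b + 1) ≤ (corona G H).dist x (Sum.inl b) := by
  set φ : V ⊕ V × W → ℕ := Sum.elim (G.dist · b) fun p ↦ G.dist p.1 b + 1
  have hφ : ∀ x y, (corona G H).Adj x y → φ x ≤ φ y + 1 := by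
    rintro (a | ⟨a, w⟩) (c | ⟨c, z⟩) h
    · exact dist_le_dist_add_one_of_adj (corona_adj_inl_inl.1 h) b
    · obtain rfl := corona_adj_inl_inr.1 h
      exact Nat.le_add_right (G.dist a b) 2
    · obtain rfl := corona_adj_inr_inl.1 h
      exact le_rfl
    · obtain ⟨rfl, -⟩ := corona_adj_inr_inr.1 h
      exact Nat.le_succ _
  simpa [φ] using le_add_dist_of_forall_adj hφ (corona_connected hG x (Sum.inl b))

lemma dist_corona_inl_inl (hG : G.Connected) (a b : V) :
    (corona G H).dist (Sum.inl a) (Sum.inl b) = G.dist a b :=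
  (dist_map_le_of_reachable (coronaInl G H) (hG a b)).antisymm
    (elim_dist_le_dist_corona_inl hG (Sum.inl a) b)

lemma dist_corona_inr_inl (hG : G.Connected) (a b : V) (w : W) :
    (corona G H).dist (Sum.inr (a, w)) (Sum.inl b) = G.dist a b + 1 := by
  refine le_antisymm ?_ (elim_dist_le_dist_corona_inl hG (Sum.inr (a, w)) b)
  rw [← dist_corona_inl_inl (H := H) hG]
  exact dist_le_dist_add_one_of_adj (corona_adj_inr_inl.2 rfl) _

lemma dist_le_dist_corona_inr_inr (hG : G.Connected) (hH : H.ediam ≤ 2) (a b : V) (w t : W) :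
    H.dist w t ≤ (corona G H).dist (Sum.inr (a, w)) (Sum.inr (b, t)) := by
  -- `φ` is the distance to the layer `V × {t}`, since every vertex of `G` has a neighbour there.
  set φ : V ⊕ V × W → ℕ := Sum.elim (fun _ ↦ 1) fun p ↦ H.dist p.2 t
  have hφ : ∀ x y, (corona G H).Adj x y → φ x ≤ φ y + 1 := by
    rintro (a | ⟨a, w⟩) (b | ⟨b, z⟩) h
    · exact Nat.le_succ 1
    · exact Nat.le_add_left 1 _
    · exact dist_le_of_ediam_le hH w t
    · exact dist_le_dist_add_one_of_adj (corona_adj_inr_inr.1 h).2 t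
  simpa [φ] using
    le_add_dist_of_forall_adj hφ (corona_connected hG (Sum.inr (a, w)) (Sum.inr (b, t)))

lemma setDist_corona_layer (hG : G.Connected) (hH : H.ediam ≤ 2) (a : V) (w t : W) :
    setDist (corona G H) (Sum.inr (a, w)) (Set.range fun b ↦ Sum.inr (b, t)) = H.dist w t := by
  have hreach : H.Reachable w t :=
    preconnected_of_ediam_ne_top (ne_top_of_le_ne_top (ENat.natCast_ne_top 2) hH) w t
  have hself : (corona G H).dist (Sum.inr (a, w)) (Sum.inr (a, t)) = H.dist w t :=
    (dist_map_le_of_reachable (coronaInr G H a) hreach).antisymm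
      (dist_le_dist_corona_inr_inr hG hH a a w t)
  rw [← hself]
  refine setDist_eq_dist_of_forall_le (Set.mem_range_self a) ?_
  rintro _ ⟨b, rfl⟩
  exact hself.trans_le (dist_le_dist_corona_inr_inr hG hH a b w t)

end Corona

lemma enatCard_option (α : Type*) : ENat.card (Option α) = ENat.card α + 1 := by
  simp [ENat.card_congr (Equiv.optionEquivSumPUnit.{0} α)]

section Coloring

variable {V W : Type*} {S : Set V} {T : Set W}

open Classical in
/-- The colouring whose classes are the singletons of points of `S` and the complement of `S`, the
latter coloured `none`. -/
noncomputable def singletonColor (S : Set V) (a : V) : Option S :=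
  if h : a ∈ S then some ⟨a, h⟩ else none

lemma singletonColor_eq_iff {a s : V} (hs : s ∈ S) :
    singletonColor S a = singletonColor S s ↔ a = s := by
  refine ⟨fun h ↦ ?_, congrArg _⟩
  by_cases ha : a ∈ S <;> simp_all [singletonColor]

/-- The colouring of `G ⊙ H` whose classes are the cells of the resolving partition built from
`S` and `T`: the two `none`s mark the rest of `G` and the rest of the copies of `H`. -/
noncomputable def coronaColor (S : Set V) (T : Set W) : V ⊕ V × W → Option S ⊕ Option T :=
  Sum.map (singletonColor S) fun p ↦ singletonColor T p.2

lemma coronaColor_preimage_inl {s : V} (hs : s ∈ S) :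
    coronaColor S T ⁻¹' {coronaColor S T (Sum.inl s)} = {Sum.inl s} := by
  ext (a | p) <;> simp [coronaColor, singletonColor_eq_iff hs]

lemma coronaColor_preimage_inr (a : V) {t : W} (ht : t ∈ T) :
    coronaColor S T ⁻¹' {coronaColor S T (Sum.inr (a, t))} =
      Set.range fun b ↦ Sum.inr (b, t) := by
  ext (b | ⟨b, w⟩) <;> simp [coronaColor, singletonColor_eq_iff ht, eq_comm (a := t)]

end Coloring

-- Bounding `encard` is what makes this meaningful for infinite graphs: `partitionDim` is defined by
-- `ncard`, which is `0` on infinite partitions.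
theorem stmt4_general {V W : Type*} {G : SimpleGraph V} {H : SimpleGraph W} {S : Set V} {T : Set W}
    (hG : G.Connected) (hH : H.ediam ≤ 2) (hS : IsResolvingSet G S) (hT : IsResolvingSet H T) :
    ∃ P, IsResolvingPartition (corona G H) P ∧ P.encard ≤ S.encard + T.encard + 2 := by
  have hcard : ENat.card (Option S ⊕ Option T) = S.encard + T.encard + 2 := by
    rw [ENat.card_sum, enatCard_option, enatCard_option, add_add_add_comm, one_add_one_eq_two,
      Set.encard, Set.encard]
  rw [← hcard]
  refine exists_isResolvingPartition_of_coloring (corona_connected hG) (coronaColor S T)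
    fun u v huv h ↦ ?_
  have hdist : ∀ s ∈ S, (corona G H).dist u (Sum.inl s) = (corona G H).dist v (Sum.inl s) :=
    fun s hs ↦ by simpa only [coronaColor_preimage_inl hs, setDist_singleton] using h (Sum.inl s)
  rcases u with a | ⟨a, w⟩ <;> rcases v with b | ⟨b, z⟩
  · simp only [dist_corona_inl_inl hG] at hdist
    rw [hS a b hdist]
  · cases huv
  · cases huv
  · simp only [dist_corona_inr_inl hG, Nat.add_right_cancel_iff] at hdist
    have hlayer : ∀ t ∈ T, H.dist w t = H.dist z t := fun t ht ↦ by
      simpa only [coronaColor_preimage_inr a ht, setDist_corona_layer hG hH]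
        using h (Sum.inr (a, t))
    rw [hS a b hdist, hT w z hlayer]

/-- For connected graphs `G` and `H` of orders `n₁ ≥ 2` and `n₂ ≥ 2`, if the
diameter of `H` is at most `2`, then `pd(G⊙H) ≤ dim(G) + dim(H) + 2`. -/
theorem stmt4 {V W : Type*} [Fintype V] [Fintype W] (G : SimpleGraph V) (H : SimpleGraph W)
    (h₁ : 2 ≤ Fintype.card V) (h₂ : 2 ≤ Fintype.card W)
    (hG : G.Connected) (hH : H.Connected) (hd : H.diam ≤ 2) :
    partitionDim (corona G H) ≤ metricDim G + metricDim H + 2 := by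
  obtain ⟨S, hS, hScard⟩ := exists_isResolvingSet_encard_eq_metricDim hG
  obtain ⟨T, hT, hTcard⟩ := exists_isResolvingSet_encard_eq_metricDim hH
  obtain ⟨P, hP, hPcard⟩ := stmt4_general hG (ediam_le_of_diam_le hH hd) hS hT
  exact partitionDim_le_of_encard_le hP (by simpa [hScard, hTcard] using hPcard)
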